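/- Let α, β, γ ∈ Φ with (α,β) = 1, (β,γ) = 1 and (α,γ) = 0, and suppose there is a simple root α_i that occurs with coefficient exactly 1 in the expansion of each of α, β, γ as a linear combination of simple roots. Then δ := α − β + γ is a root, α_i occurs with coefficient exactly 1 in the expansion of δ, and δ ∈ Φ⁺. -/

import Mathlib

open scoped RealInnerProductSpace

/-!
Reflecting `α` in `β` gives the root `α - β`, and `⟪γ, α - β⟫ = -1`, so reflecting once more in `γ`
gives `α - β + γ`. The coefficient of the distinguished simple root is additive, hence equals
`1 - 1 + 1 = 1`; a root with a positive coefficient cannot be the negative of a positive root.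
-/

section Reflection

variable {R M : Type*} [CommRing R] [AddCommGroup M] [Module R M]
  {Φ : Set M} {coroot : M → Module.Dual R M} {α β γ : M}

theorem sub_mem_of_coroot_eq_one
    (hΦ : ∀ v ∈ Φ, Set.MapsTo (Module.preReflection v (coroot v)) Φ Φ)
    (hα : α ∈ Φ) (hβ : β ∈ Φ) (h : coroot β α = 1) : α - β ∈ Φ := by
  simpa [Module.preReflection_apply, h] using hΦ β hβ hα

theorem add_mem_of_coroot_eq_neg_one
    (hΦ : ∀ v ∈ Φ, Set.MapsTo (Module.preReflection v (coroot v)) Φ Φ)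
    (hα : α ∈ Φ) (hβ : β ∈ Φ) (h : coroot β α = -1) : α + β ∈ Φ := by
  simpa [Module.preReflection_apply, h] using hΦ β hβ hα

theorem sub_add_mem_of_coroot_eq
    (hΦ : ∀ v ∈ Φ, Set.MapsTo (Module.preReflection v (coroot v)) Φ Φ)
    (hα : α ∈ Φ) (hβ : β ∈ Φ) (hγ : γ ∈ Φ)
    (hβα : coroot β α = 1) (hγβ : coroot γ β = 1) (hγα : coroot γ α = 0) :
    α - β + γ ∈ Φ := by
  have hsub : α - β ∈ Φ := sub_mem_of_coroot_eq_one hΦ hα hβ hβα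
  have hpair : coroot γ (α - β) = -1 := by rw [map_sub, hγα, hγβ, zero_sub]
  exact add_mem_of_coroot_eq_neg_one hΦ hsub hγ hpair

end Reflection

/-- The vector `v` has an expansion in the family `s` with integer coefficients, cast into `R`,
whose `i`-th coefficient is `n`. When `s` is linearly independent this says that the simple root
`s i` occurs in `v` with coefficient `n`. -/
def HasIntCoeff (R : Type*) {M ι : Type*} [Ring R] [AddCommGroup M] [Module R M] [Fintype ι]
    (s : ι → M) (i : ι) (n : ℤ) (v : M) : Prop :=
  ∃ c : ι → ℤ, v = ∑ j, (c j : R) • s j ∧ c i = n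

namespace HasIntCoeff

variable {R M ι : Type*} [Ring R] [AddCommGroup M] [Module R M] [Fintype ι]
  {s : ι → M} {i : ι} {m n : ℤ} {v w : M}

theorem add (hv : HasIntCoeff R s i m v) (hw : HasIntCoeff R s i n w) :
    HasIntCoeff R s i (m + n) (v + w) := by
  obtain ⟨a, rfl, rfl⟩ := hv
  obtain ⟨b, rfl, rfl⟩ := hw
  exact ⟨a + b, by simp [add_smul, Finset.sum_add_distrib], rfl⟩

theorem neg (hv : HasIntCoeff R s i n v) : HasIntCoeff R s i (-n) (-v) := by
  obtain ⟨c, rfl, rfl⟩ := hv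
  exact ⟨-c, by simp, rfl⟩

theorem sub (hv : HasIntCoeff R s i m v) (hw : HasIntCoeff R s i n w) :
    HasIntCoeff R s i (m - n) (v - w) := by
  simpa only [sub_eq_add_neg] using hv.add hw.neg

theorem unique [CharZero R] (hs : LinearIndependent R s)
    (hm : HasIntCoeff R s i m v) (hn : HasIntCoeff R s i n v) : m = n := by
  obtain ⟨a, ha, rfl⟩ := hm
  obtain ⟨b, hb, rfl⟩ := hn
  have hcoeff := Fintype.linearIndependent_iffₛ.mp hs _ _ (ha.symm.trans hb) i
  exact Int.cast_injective hcoeff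

theorem mem_of_pos [CharZero R] {P : Set M} (hs : LinearIndependent R s)
    (hP : ∀ u ∈ P, ∃ c : ι → ℕ, u = ∑ j, (c j : R) • s j)
    (hv : HasIntCoeff R s i n v) (hn : 0 < n) (hmem : v ∈ P ∨ -v ∈ P) : v ∈ P := by
  refine hmem.resolve_right fun hneg ↦ ?_
  obtain ⟨c, hc⟩ := hP _ hneg
  have hci : HasIntCoeff R s i (c i) (-v) := ⟨fun j ↦ c j, by simpa using hc, rfl⟩
  have : (c i : ℤ) = -n := hci.unique hs hv.neg
  lia

end HasIntCoeff

theorem rhombus_positive_general {R M ι : Type*} [CommRing R] [CharZero R]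
    [AddCommGroup M] [Module R M] [Fintype ι]
    {Φ Φpos : Set M} {coroot : M → Module.Dual R M} {simple : ι → M}
    (hrefl : ∀ v ∈ Φ, Set.MapsTo (Module.preReflection v (coroot v)) Φ Φ)
    (hsplit : ∀ v ∈ Φ, v ∈ Φpos ∨ -v ∈ Φpos)
    (hsind : LinearIndependent R simple)
    (hsspan : ∀ v ∈ Φpos, ∃ c : ι → ℕ, v = ∑ j, (c j : R) • simple j)
    {α β γ : M} (hα : α ∈ Φ) (hβ : β ∈ Φ) (hγ : γ ∈ Φ)
    (hβα : coroot β α = 1) (hγβ : coroot γ β = 1) (hγα : coroot γ α = 0) {i : ι}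
    (hcα : HasIntCoeff R simple i 1 α) (hcβ : HasIntCoeff R simple i 1 β)
    (hcγ : HasIntCoeff R simple i 1 γ) :
    α - β + γ ∈ Φ ∧ HasIntCoeff R simple i 1 (α - β + γ) ∧ α - β + γ ∈ Φpos := by
  have hroot : α - β + γ ∈ Φ := sub_add_mem_of_coroot_eq hrefl hα hβ hγ hβα hγβ hγα
  have hcoeff : HasIntCoeff R simple i 1 (α - β + γ) := (hcα.sub hcβ).add hcγ
  exact ⟨hroot, hcoeff, hcoeff.mem_of_pos hsind hsspan one_pos (hsplit _ hroot)⟩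

/-- In a simply laced root system with a fixed system of positive roots and simple
roots `simple 0, …, simple (r-1)`, if `(α,β) = 1`, `(β,γ) = 1`, `(α,γ) = 0` and some
simple root `simple i` occurs with coefficient exactly `1` in the expansions of each
of `α`, `β`, `γ`, then `δ = α - β + γ` is a root, `simple i` occurs with coefficient
exactly `1` in the expansion of `δ`, and `δ` is a positive root. -/
theorem rhombus_positive {V : Type*} [NormedAddCommGroup V] [InnerProductSpace ℝ V]
    [FiniteDimensional ℝ V]
    (Φ : Finset V)
    (hΦ0 : (0 : V) ∉ Φ)
    (hrefl : ∀ α ∈ Φ, ∀ β ∈ Φ, β - ⟪α, β⟫ • α ∈ Φ)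
    (hred : ∀ α ∈ Φ, ∀ c : ℝ, c • α ∈ Φ → c = 1 ∨ c = -1)
    (hcrys : ∀ α ∈ Φ, ∀ β ∈ Φ, ∃ n : ℤ, ⟪α, β⟫ = (n : ℝ))
    (hnorm : ∀ α ∈ Φ, ⟪α, α⟫ = 2)
    (Φpos : Finset V) (hpos : Φpos ⊆ Φ)
    (hsplit : ∀ α ∈ Φ, (α ∈ Φpos ↔ -α ∉ Φpos))
    (r : ℕ) (simple : Fin r → V)
    (hsmem : ∀ i, simple i ∈ Φpos)
    (hsind : LinearIndependent ℝ simple)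
    (hsspan : ∀ α ∈ Φpos, ∃ c : Fin r → ℕ, α = ∑ j, (c j : ℝ) • simple j)
    (α β γ : V) (hα : α ∈ Φ) (hβ : β ∈ Φ) (hγ : γ ∈ Φ)
    (hab : ⟪α, β⟫ = 1) (hbc : ⟪β, γ⟫ = 1) (hac : ⟪α, γ⟫ = 0)
    (i : Fin r)
    (hcα : ∃ c : Fin r → ℤ, α = ∑ j, (c j : ℝ) • simple j ∧ c i = 1)
    (hcβ : ∃ c : Fin r → ℤ, β = ∑ j, (c j : ℝ) • simple j ∧ c i = 1)
    (hcγ : ∃ c : Fin r → ℤ, γ = ∑ j, (c j : ℝ) • simple j ∧ c i = 1) :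
    α - β + γ ∈ Φ ∧
      (∃ c : Fin r → ℤ, α - β + γ = ∑ j, (c j : ℝ) • simple j ∧ c i = 1) ∧
      α - β + γ ∈ Φpos := by
  exact rhombus_positive_general (Φ := Φ) (Φpos := Φpos) (coroot := innerₗ V) hrefl
    (fun v hv ↦ or_iff_not_imp_right.mpr (hsplit v hv).mpr) hsind hsspan hα hβ hγ
    ((real_inner_comm α β).trans hab) ((real_inner_comm β γ).trans hbc)
    ((real_inner_comm α γ).trans hac) hcα hcβ hcγ
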